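/- Let H be a complex Hilbert space. The group U_∞(H) consisting of all unitary operators u on H such that u − 1 is a compact operator, equipped with the operator-norm topology, is a bounded topological group: for every neighborhood U of the identity in U_∞(H) there exists n ∈ ℕ such that every element of U_∞(H) is a product of n elements of U. -/

import Mathlib

open Pointwise

/-!
Let `u - 1` be compact. If `-1` is not in the spectrum of `u`, then `a = arg u` is a compact
self-adjoint operator of norm at most `π` with `u = exp (i a) = exp (i a / n) ^ n`. Compactness
passes through the functional calculus in both directions because
`f(a) - f(c) = (a - c) g(a)`, where `g` is the difference quotient of `f` at `c`. The factor
`exp (i a / n)` is close to `1` uniformly in `a`, so one `n` works for all such `u`.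

If `-1` is in the spectrum, let `P` be the projection onto the eigenspace of `-1`, which is
compact, and write `u = v w` with `w = 1 + (i - 1) P`. Then `v` acts as `i` on this eigenspace and
as `u` on its orthogonal complement, so `-1` is not an eigenvalue of `v`, and by the Fredholm
alternative it is not in the spectrum of `v`. As `‖w - 1‖ ≤ √2 < 2`, the first case applies to both
factors.
-/

open scoped Real Topology

section StarAlgebra

variable {R A : Type*} [CommRing R] [StarRing R] [Ring A] [StarRing A] [Algebra R A]
  [StarModule R A]

lemma one_add_sub_one_smul_mem_unitary {z : R} (hz : z ∈ unitary R) {p : A}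
    (hp : IsStarProjection p) : 1 + (z - 1) • p ∈ unitary A := by
  have norm_expand : (star z - 1) + (z - 1) + (star z - 1) * (z - 1) = 0 := by
    linear_combination Unitary.star_mul_self_of_mem hz
  have mul_expand (a b : R) : (1 + a • p) * (1 + b • p) = 1 + (a + b + a * b) • p := by
    simp only [add_mul, mul_add, one_mul, mul_one, smul_mul_smul_comm, hp.isIdempotentElem.eq]
    module
  have star_eq : star (1 + (z - 1) • p) = 1 + (star z - 1) • p := by
    simp only [star_add, star_one, star_smul, star_sub, hp.isSelfAdjoint.star_eq]
  rw [Unitary.mem_iff, star_eq, mul_expand, mul_expand, add_comm (z - 1), mul_comm (z - 1),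
    norm_expand, zero_smul, add_zero]
  exact ⟨rfl, rfl⟩

lemma mul_star_one_add_sub_one_smul {u p : A} (hp : IsSelfAdjoint p) {c : R} (h : u * p = c • p)
    (z : R) : u * star (1 + (z - 1) • p) = u + (c * (star z - 1)) • p := calc
  u * star (1 + (z - 1) • p) = u * (1 + (star z - 1) • p) := by
    simp only [star_add, star_one, star_smul, star_sub, hp.star_eq]
  _ = u + (c * (star z - 1)) • p := by
    rw [mul_add, mul_one, mul_smul_comm, h, smul_smul, mul_comm]

lemma mul_eq_smul_of_mul_eq_smul_of_mem_unitary {u p : A} (hu : u ∈ unitary A)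
    (hp : IsSelfAdjoint p) {z : R} (hz : z ∈ unitary R) (h : u * p = z • p) :
    p * u = z • p := by
  have star_u_mul : star u * p = star z • p := calc
    star u * p = star z • (star u * (z • p)) := by
      rw [mul_smul_comm, smul_smul, Unitary.star_mul_self_of_mem hz, one_smul]
    _ = star z • p := by rw [← h, ← mul_assoc, Unitary.star_mul_self_of_mem hu, one_mul]
  simpa only [star_mul, star_star, star_smul, hp.star_eq] using congrArg star star_u_mul

end StarAlgebra

section FunctionalCalculus

variable {𝕜 A : Type*} {P : A → Prop} [RCLike 𝕜] [Ring A] [StarRing A] [TopologicalSpace A]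
  [Algebra 𝕜 A] [ContinuousFunctionalCalculus 𝕜 A P]

lemma cfc_sub_algebraMap_eq_mul_cfc_dslope {a : A} (ha : P a) {c : 𝕜} {f : 𝕜 → 𝕜} {s : Set 𝕜}
    (hs : s ∈ 𝓝 c) (ha_s : spectrum 𝕜 a ⊆ s) (hf : ContinuousOn f s)
    (hfc : DifferentiableAt 𝕜 f c) :
    cfc f a - algebraMap 𝕜 A (f c) = (a - algebraMap 𝕜 A c) * cfc (dslope f c) a := by
  have f_continuousOn : ContinuousOn f (spectrum 𝕜 a) := hf.mono ha_s
  have dslope_continuousOn : ContinuousOn (dslope f c) (spectrum 𝕜 a) :=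
    ((continuousOn_dslope hs).mpr ⟨hf, hfc⟩).mono ha_s
  calc
    cfc f a - algebraMap 𝕜 A (f c) = cfc (fun z ↦ f z - f c) a := by
      rw [cfc_sub .., cfc_const ..]
    _ = cfc (fun z ↦ (z - c) * dslope f c z) a :=
      cfc_congr fun z _ ↦ (sub_smul_dslope f c z).symm
    _ = (a - algebraMap 𝕜 A c) * cfc (dslope f c) a := by
      rw [cfc_mul .., cfc_sub .., cfc_id' .., cfc_const ..]

end FunctionalCalculus

section CStarAlgebra

open Complex selfAdjoint

section BanachStarAlgebra

variable {A : Type*} [NormedRing A] [NormedAlgebra ℂ A] [StarRing A] [ContinuousStar A]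
  [CompleteSpace A] [StarModule ℂ A]

lemma expUnitary_nsmul (a : selfAdjoint A) (n : ℕ) : expUnitary (n • a) = expUnitary a ^ n := by
  induction n with
  | zero => rw [zero_smul, pow_zero, expUnitary_zero]
  | succ n ih =>
    have commute : Commute ((n • a : selfAdjoint A) : A) a := (Commute.refl (a : A)).smul_left n
    rw [succ_nsmul, pow_succ, commute.expUnitary_add, ih]

lemma exists_forall_expUnitary_inv_smul_mem {V : Set (unitary A)} (hV : V ∈ 𝓝 1) (r : ℝ) :
    ∃ n : ℕ, ∀ a : selfAdjoint A, ‖a‖ ≤ r →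
      expUnitary ((n : ℝ)⁻¹ • a) ∈ V ∧ expUnitary ((n : ℝ)⁻¹ • a) ^ n = expUnitary a := by
  have exp_preimage_mem : expUnitary ⁻¹' V ∈ 𝓝 (0 : selfAdjoint A) :=
    continuous_expUnitary.continuousAt.preimage_mem_nhds (by rwa [expUnitary_zero])
  obtain ⟨δ, δ_pos, hδ⟩ := Metric.mem_nhds_iff.mp exp_preimage_mem
  obtain ⟨n, hn⟩ := exists_nat_gt (max 0 (r / δ))
  obtain ⟨n_pos, r_div_lt⟩ := max_lt_iff.mp hn
  refine ⟨n, fun a ha ↦ ⟨hδ ?_, ?_⟩⟩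
  · rw [mem_ball_zero_iff]
    calc
      ‖(n : ℝ)⁻¹ • a‖ = (n : ℝ)⁻¹ * ‖a‖ := by
        rw [norm_smul, norm_inv, RCLike.norm_natCast]
      _ ≤ (n : ℝ)⁻¹ * r := by gcongr
      _ < δ := by rwa [inv_mul_lt_iff₀ n_pos, ← div_lt_iff₀ δ_pos]
  · rw [← expUnitary_nsmul, ← Nat.cast_smul_eq_nsmul ℝ, smul_inv_smul₀ n_pos.ne']

end BanachStarAlgebra

variable {A : Type*} [CStarAlgebra A]

lemma coe_expUnitary_eq_cfc (a : selfAdjoint A) :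
    (expUnitary a : A) = cfc (fun z : ℂ ↦ exp (I • z)) (a : A) := by
  rw [expUnitary_coe, ← CFC.exp_eq_normedSpace_exp (𝕜 := ℂ), ← cfc_comp_smul ..,
    exp_eq_exp_ℂ]

lemma coe_argSelfAdjoint_eq_cfc_log (u : unitary A) (hu : ‖(u - 1 : A)‖ < 2) :
    (Unitary.argSelfAdjoint u : A) = -I • cfc log (u : A) := by
  have log_continuousOn : ContinuousOn log (spectrum ℂ (u : A)) := fun z hz ↦
    (continuousAt_clog
      ((Unitary.spectrum_subset_slitPlane_iff_norm_lt_two u.2).mpr hu hz)).continuousWithinAt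
  rw [Unitary.argSelfAdjoint_coe, ← cfc_smul ..]
  refine cfc_congr fun z hz ↦ ?_
  have norm_z : ‖z‖ = 1 := spectrum.norm_eq_one_of_unitary u.2 hz
  simp only [log, norm_z, Real.log_one, ofReal_zero, zero_add, smul_eq_mul]
  linear_combination (arg z : ℂ) * I_mul_I

lemma norm_I_sub_one_smul_lt_two {p : A} (hp : IsStarProjection p) : ‖(I - 1) • p‖ < 2 := calc
  ‖(I - 1) • p‖ ≤ ‖I - 1‖ * 1 :=
    (norm_smul_le _ _).trans (mul_le_mul_of_nonneg_left hp.norm_le (norm_nonneg _))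
  _ = √2 := by rw [mul_one, norm_def, normSq_apply]; norm_num
  _ < 2 := Real.sqrt_lt_self_iff.mpr one_lt_two

end CStarAlgebra

section CompactPerturbationOfScalar

variable {𝕜 X : Type*} [NontriviallyNormedField 𝕜] [NormedAddCommGroup X] [NormedSpace 𝕜 X]
  [CompleteSpace X]

lemma notMem_spectrum_of_isCompactOperator_sub_algebraMap {T : X →L[𝕜] X} {c μ : 𝕜}
    (hT : IsCompactOperator (T - algebraMap 𝕜 (X →L[𝕜] X) c)) (hμ : μ ≠ c)
    (h : ∀ x, T x = μ • x → x = 0) : μ ∉ spectrum 𝕜 T := by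
  intro μ_mem
  have sub_mem : μ - c ∈ spectrum 𝕜 (T - algebraMap 𝕜 (X →L[𝕜] X) c) := by
    rw [← spectrum.sub_singleton_eq]
    exact Set.sub_mem_sub μ_mem rfl
  obtain ⟨x, hx⟩ :=
    ((hT.hasEigenvalue_iff_mem_spectrum (sub_ne_zero.mpr hμ)).mpr sub_mem).exists_hasEigenvector
  refine hx.2 (h x ?_)
  have : T x - c • x = (μ - c) • x := hx.apply_eq_smul
  rwa [sub_smul, sub_left_inj] at this

lemma notMem_spectrum_add_smul_of_isIdempotentElem {T p : X →L[𝕜] X} {c μ ν : 𝕜}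
    (hT : IsCompactOperator (T - algebraMap 𝕜 (X →L[𝕜] X) c)) (hμ : μ ≠ c)
    (hp_compact : IsCompactOperator p) (hp : IsIdempotentElem p) (hpT : p * T = μ • p)
    (hp_fix : ∀ x, T x = μ • x → p x = x) (hν : ν ≠ 0) : μ ∉ spectrum 𝕜 (T + ν • p) := by
  have sum_compact :
      IsCompactOperator (T + ν • p - algebraMap 𝕜 (X →L[𝕜] X) c) := by
    rw [add_sub_right_comm]
    exact hT.add (hp_compact.smul ν)
  refine notMem_spectrum_of_isCompactOperator_sub_algebraMap sum_compact hμ fun x hx ↦ ?_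
  have proj_mul : p * (T + ν • p) = (μ + ν) • p := by
    rw [mul_add, hpT, mul_smul_comm, hp.eq, add_smul]
  have proj_eq : (μ + ν) • p x = μ • p x := by
    calc
      (μ + ν) • p x = p ((T + ν • p) x) := (DFunLike.congr_fun proj_mul x).symm
      _ = μ • p x := by rw [hx, map_smul]
  have proj_zero : p x = 0 := by
    rw [add_smul, add_eq_left] at proj_eq
    exact (smul_eq_zero.mp proj_eq).resolve_left hν
  have eigen : T x = μ • x := by
    rw [← hx, add_apply, smul_apply, proj_zero, smul_zero, add_zero]
  rw [← hp_fix x eigen, proj_zero]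

end CompactPerturbationOfScalar

lemma exists_isStarProjection_eigenspace {𝕜 H : Type*} [RCLike 𝕜] [NormedAddCommGroup H]
    [InnerProductSpace 𝕜 H] [CompleteSpace H] {T : H →L[𝕜] H} {c μ : 𝕜}
    (hT : IsCompactOperator (T - algebraMap 𝕜 (H →L[𝕜] H) c)) (hμ : μ ≠ c) :
    ∃ p : H →L[𝕜] H, IsStarProjection p ∧ IsCompactOperator p ∧ T * p = μ • p ∧
      ∀ x, T x = μ • x → p x = x := by
  set E : Submodule 𝕜 H := (T - algebraMap 𝕜 (H →L[𝕜] H) μ).ker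
  have mem_E (x : H) : x ∈ E ↔ T x = μ • x := sub_eq_zero (a := T x) (b := μ • x)
  have : CompleteSpace E :=
    (T - algebraMap 𝕜 (H →L[𝕜] H) μ).isClosed_ker.completeSpace_coe
  have mul_proj : T * E.starProjection = μ • E.starProjection := by
    ext x
    exact (mem_E _).mp (E.starProjection_apply_mem x)
  have sub_mul_proj : (T - algebraMap 𝕜 (H →L[𝕜] H) c) * E.starProjection =
      (μ - c) • E.starProjection := by
    rw [sub_mul, mul_proj, ← Algebra.smul_def, sub_smul]
  refine ⟨E.starProjection, isStarProjection_starProjection, ?_, mul_proj,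
    fun x hx ↦ Submodule.starProjection_eq_self_iff.mpr ((mem_E x).mpr hx)⟩
  have smul_compact : IsCompactOperator ((μ - c) • E.starProjection) := by
    rw [← sub_mul_proj]
    exact hT.comp_clm E.starProjection
  exact (IsCompactOperator.smul_iff₀ (sub_ne_zero.mpr hμ)).mp smul_compact

lemma isCompactOperator_cfc_sub_algebraMap {H : Type*} [NormedAddCommGroup H]
    [InnerProductSpace ℂ H] [CompleteSpace H] {a : H →L[ℂ] H} (ha : IsStarNormal a) {c : ℂ}
    (hac : IsCompactOperator (a - algebraMap ℂ (H →L[ℂ] H) c)) {f : ℂ → ℂ} {s : Set ℂ}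
    (hs : s ∈ 𝓝 c) (ha_s : spectrum ℂ a ⊆ s) (hf : ContinuousOn f s)
    (hfc : DifferentiableAt ℂ f c) :
    IsCompactOperator (cfc f a - algebraMap ℂ (H →L[ℂ] H) (f c)) := by
  rw [cfc_sub_algebraMap_eq_mul_cfc_dslope ha hs ha_s hf hfc]
  exact hac.comp_clm _

/-- The group `U_∞(H)` of unitary operators `u` with `u - 1` compact, as a subgroup of the unitary
group of `H`. -/
def unitaryCompactPerturbation (𝕜 H : Type*) [RCLike 𝕜] [NormedAddCommGroup H]
    [InnerProductSpace 𝕜 H] [CompleteSpace H] : Subgroup (unitary (H →L[𝕜] H)) where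
  carrier := {u | IsCompactOperator ⇑((u : H →L[𝕜] H) - 1)}
  one_mem' := by
    change IsCompactOperator ⇑((1 : H →L[𝕜] H) - 1)
    rw [sub_self]
    exact isCompactOperator_zero
  mul_mem' {u v} hu hv := by
    have mul_sub_one : (u * v : H →L[𝕜] H) - 1 = (u - 1) * v + (v - 1) := by noncomm_ring
    change IsCompactOperator ⇑((u * v : H →L[𝕜] H) - 1)
    rw [mul_sub_one]
    exact (hu.comp_clm (v : H →L[𝕜] H)).add hv
  inv_mem' {u} hu := by
    have star_sub_one : star (u : H →L[𝕜] H) - 1 = -((u - 1) * star (u : H →L[𝕜] H)) := by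
      rw [sub_mul, Unitary.mul_star_self_of_mem u.2, one_mul, neg_sub]
    change IsCompactOperator ⇑(star (u : H →L[𝕜] H) - 1)
    rw [star_sub_one]
    exact (hu.comp_clm (star (u : H →L[𝕜] H))).neg

namespace unitaryCompactPerturbation

open Complex selfAdjoint

lemma mem_iff_isCompactOperator_sub_algebraMap {𝕜 H : Type*} [RCLike 𝕜] [NormedAddCommGroup H]
    [InnerProductSpace 𝕜 H] [CompleteSpace H] {u : unitary (H →L[𝕜] H)} :
    u ∈ unitaryCompactPerturbation 𝕜 H ↔
      IsCompactOperator ⇑((u : H →L[𝕜] H) - algebraMap 𝕜 (H →L[𝕜] H) 1) := by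
  rw [map_one]
  rfl

variable {H : Type*} [NormedAddCommGroup H] [InnerProductSpace ℂ H] [CompleteSpace H]

lemma expUnitary_mem {a : selfAdjoint (H →L[ℂ] H)} (ha : IsCompactOperator (a : H →L[ℂ] H)) :
    expUnitary a ∈ unitaryCompactPerturbation ℂ H := by
  have exp_differentiable : Differentiable ℂ fun z : ℂ ↦ exp (I • z) := by fun_prop
  have a_sub_compact : IsCompactOperator ⇑((a : H →L[ℂ] H) - algebraMap ℂ (H →L[ℂ] H) 0) := by
    rwa [map_zero, sub_zero]
  have := isCompactOperator_cfc_sub_algebraMap a.2.isStarNormal a_sub_compact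
    Filter.univ_mem (Set.subset_univ _) exp_differentiable.continuous.continuousOn
    (exp_differentiable 0)
  rwa [smul_zero, exp_zero, ← coe_expUnitary_eq_cfc,
    ← mem_iff_isCompactOperator_sub_algebraMap] at this

lemma isCompactOperator_argSelfAdjoint {u : unitary (H →L[ℂ] H)}
    (hu : u ∈ unitaryCompactPerturbation ℂ H) (hu_norm : ‖(u - 1 : H →L[ℂ] H)‖ < 2) :
    IsCompactOperator (Unitary.argSelfAdjoint u : H →L[ℂ] H) := by
  have spectrum_subset : spectrum ℂ (u : H →L[ℂ] H) ⊆ slitPlane :=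
    (Unitary.spectrum_subset_slitPlane_iff_norm_lt_two u.2).mpr hu_norm
  have log_continuousOn : ContinuousOn log slitPlane := fun z hz ↦
    (continuousAt_clog hz).continuousWithinAt
  have := isCompactOperator_cfc_sub_algebraMap inferInstance
    (mem_iff_isCompactOperator_sub_algebraMap.mp hu)
    (isOpen_slitPlane.mem_nhds one_mem_slitPlane) spectrum_subset log_continuousOn
    (differentiableAt_log one_mem_slitPlane)
  rw [log_one, map_zero, sub_zero] at this
  rw [coe_argSelfAdjoint_eq_cfc_log u hu_norm]
  exact this.smul (-I)

lemma exists_pow_of_norm_sub_one_lt_two {U : Set (unitary (H →L[ℂ] H))}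
    (hU : U ∈ 𝓝[unitaryCompactPerturbation ℂ H] 1) :
    ∃ n : ℕ, ∀ u ∈ unitaryCompactPerturbation ℂ H, ‖(u - 1 : H →L[ℂ] H)‖ < 2 → u ∈ U ^ n := by
  obtain ⟨V, hV, hVU⟩ := mem_nhdsWithin_iff_exists_mem_nhds_inter.mp hU
  obtain ⟨n, hn⟩ := exists_forall_expUnitary_inv_smul_mem hV π
  refine ⟨n, fun u hu hu_norm ↦ ?_⟩
  obtain ⟨exp_mem_V, exp_pow⟩ := hn _ (Unitary.norm_argSelfAdjoint_le_pi u)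
  have smul_compact : IsCompactOperator
      ((((n : ℝ)⁻¹ • Unitary.argSelfAdjoint u : selfAdjoint (H →L[ℂ] H)) : H →L[ℂ] H)) := by
    rw [val_smul]
    exact (isCompactOperator_argSelfAdjoint hu hu_norm).smul (n : ℝ)⁻¹
  have exp_mem : expUnitary ((n : ℝ)⁻¹ • Unitary.argSelfAdjoint u) ∈
      unitaryCompactPerturbation ℂ H := expUnitary_mem smul_compact
  rw [← expUnitary_argSelfAdjoint hu_norm, ← exp_pow]
  exact Set.pow_mem_pow (hVU ⟨exp_mem_V, exp_mem⟩)

lemma exists_mul_eq_and_norm_sub_one_lt_two {u : unitary (H →L[ℂ] H)}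
    (hu : u ∈ unitaryCompactPerturbation ℂ H) :
    ∃ v ∈ unitaryCompactPerturbation ℂ H, ∃ w ∈ unitaryCompactPerturbation ℂ H,
      ‖(v - 1 : H →L[ℂ] H)‖ < 2 ∧ ‖(w - 1 : H →L[ℂ] H)‖ < 2 ∧ v * w = u := by
  have u_sub_compact := mem_iff_isCompactOperator_sub_algebraMap.mp hu
  have neg_one_ne_one : (-1 : ℂ) ≠ 1 := by norm_num
  obtain ⟨p, hp, p_compact, mul_p, p_fix⟩ :=
    exists_isStarProjection_eigenspace u_sub_compact neg_one_ne_one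
  have neg_one_unitary : (-1 : ℂ) ∈ unitary ℂ := by
    simp only [Unitary.mem_iff, star_neg, star_one, neg_mul_neg, mul_one, and_self]
  have p_mul : p * u = (-1 : ℂ) • p :=
    mul_eq_smul_of_mul_eq_smul_of_mem_unitary u.2 hp.isSelfAdjoint neg_one_unitary mul_p
  have I_unitary : I ∈ unitary ℂ := by
    simp only [Unitary.mem_iff, star_def, conj_I, neg_mul, mul_neg, I_mul_I, neg_neg, and_self]
  let w : unitary (H →L[ℂ] H) := ⟨1 + (I - 1) • p, one_add_sub_one_smul_mem_unitary I_unitary hp⟩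
  have w_sub_one : (w : H →L[ℂ] H) - 1 = (I - 1) • p := add_sub_cancel_left _ _
  have w_mem : w ∈ unitaryCompactPerturbation ℂ H := by
    change IsCompactOperator ⇑((w : H →L[ℂ] H) - 1)
    rw [w_sub_one]
    exact p_compact.smul (I - 1)
  have w_norm : ‖(w - 1 : H →L[ℂ] H)‖ < 2 := by
    rw [w_sub_one]
    exact norm_I_sub_one_smul_lt_two hp
  have mul_w_inv : ((u * w⁻¹ : unitary (H →L[ℂ] H)) : H →L[ℂ] H) =
      u + (-1 * (star I - 1)) • p :=
    mul_star_one_add_sub_one_smul hp.isSelfAdjoint mul_p I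
  refine ⟨u * w⁻¹, mul_mem hu (inv_mem w_mem), w, w_mem, ?_, w_norm, inv_mul_cancel_right u w⟩
  rw [Unitary.norm_sub_one_lt_two_iff (u * w⁻¹).2, mul_w_inv]
  exact notMem_spectrum_add_smul_of_isIdempotentElem u_sub_compact neg_one_ne_one p_compact
    hp.isIdempotentElem p_mul p_fix (by simp [Complex.ext_iff])

theorem exists_subset_pow {U : Set (unitary (H →L[ℂ] H))}
    (hU : U ∈ 𝓝[unitaryCompactPerturbation ℂ H] 1) :
    ∃ n : ℕ, (unitaryCompactPerturbation ℂ H : Set (unitary (H →L[ℂ] H))) ⊆ U ^ n := by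
  obtain ⟨n, hn⟩ := exists_pow_of_norm_sub_one_lt_two hU
  refine ⟨n + n, fun u hu ↦ ?_⟩
  obtain ⟨v, hv, w, hw, v_norm, w_norm, rfl⟩ := exists_mul_eq_and_norm_sub_one_lt_two hu
  rw [pow_add]
  exact Set.mul_mem_mul (hn v hv v_norm) (hn w hw w_norm)

end unitaryCompactPerturbation

/-- The group `U_∞(H)` of unitary operators `u` on a complex Hilbert space `H`
with `u - 1` compact, endowed with the operator-norm topology (as a subspace of the unitary
group of `H`, which itself carries the norm topology), is a bounded topological group: for
every neighborhood `U` of the identity in `U_∞(H)` there is `n ∈ ℕ` such that every element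
of `U_∞(H)` is a product of `n` elements of `U`. -/
theorem unitaryCompactPerturbation_bounded
    {H : Type*} [NormedAddCommGroup H] [InnerProductSpace ℂ H] [CompleteSpace H]
    -- the carrier of `U_∞(H)` inside the full unitary group (with the norm topology):
    (S : Set (unitary (H →L[ℂ] H)))
    (hS : S = {u : unitary (H →L[ℂ] H) | IsCompactOperator (⇑((u : H →L[ℂ] H) - 1))})
    -- `U` is a neighborhood of the identity in the subspace topology of `U_∞(H)`:
    (U : Set (unitary (H →L[ℂ] H))) (hUS : U ⊆ S) (hU : U ∈ nhdsWithin 1 S) :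
    ∃ n : ℕ, ∀ g ∈ S, g ∈ U ^ n := by
  obtain rfl : S = unitaryCompactPerturbation ℂ H := hS
  exact unitaryCompactPerturbation.exists_subset_pow hU
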